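/- Let D1 and D2 be coprime positive fundamental discriminants and let x be an integer with x ≡ D1·D2 (mod 2); set m := (D1·D2 − x²)/4, a nonzero integer. Then for every prime p, the quaternion algebra ℍ[ℚ_p, D1, x² − D1·D2] is a division ring if and only if v_p(m) is odd and ε(p) = −1. Moreover, the number of primes p with this property is even. -/

import Mathlib

/-!
Put `n = x² - D₁ D₂ = -4 m`. Over a field of characteristic other than two, the quaternion algebra
`(a, n)` is a division ring exactly when `n` is not of the form `u² - a v²`
(`quaternion_division_iff`).

Local part. If `p ∤ D₁`, the extension `ℚ_p(√D₁)` is unramified, so `n` is a norm from it exactly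
when `v_p(n)` is even or `D₁` is a square in `ℚ_p`; since `v_p(n)` and `v_p(m)` have the same
parity, this is the claim (`isNormOf_iff_odd`, `isNormOf_iff_two`). If `p ∣ D₁`, then `p ∤ D₂`, and
the identity `D₁ D₂ = x² - n` exhibits `D₁ D₂` as a norm from `ℚ_p(√n)`, so the symbols `(D₁, n)`
and `(D₂, n)` agree (`isNormOf_comm_of_mul_eq`); this reduces to the first case.

Global part. Since `ε` takes the values `±1` at all primes, `(-1)` to the number of ramified primes
is the multiplicative extension of `ε` evaluated at `|m|` (`multExt_eq_neg_one_pow`). By the symmetry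
of the local symbols `D₁` may be taken odd. With `g = gcd(D₁, x)`, `D₁ = g h`, `x = g y` and
`m = g m'`, the value is `(D₂/g) (m'/D₁)`, and `4 m' = h D₂ - g y²` turns it into
`(D₂/g)² (h/g) (-g/h)`, which is `1` by quadratic reciprocity because `g h ≡ 1 (mod 4)`
(`multExt_epsGZ_eq_one`).
-/

open Quaternion
open scoped Classical

/-- The Kronecker symbol `(D/p)` at a prime `p`: for odd `p` it is the Legendre symbol
(`0` if `p ∣ D`, `1` if `D` is a nonzero square mod `p`, `-1` otherwise); for `p = 2` it is
`0` if `D` is even, `1` if `D ≡ ±1 (mod 8)` and `-1` if `D ≡ ±3 (mod 8)`. -/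
noncomputable def kron (D : ℤ) (p : ℕ) : ℤ :=
  if p = 2 then
    if D % 2 = 0 then 0 else if D % 8 = 1 ∨ D % 8 = 7 then 1 else -1
  else if (p : ℤ) ∣ D then 0
  else if ∃ y : ℤ, (p : ℤ) ∣ (y ^ 2 - D) then 1 else -1

/-- The Gross–Zagier function `ε(p)`: `ε(p) = (D1/p)` if `p ∤ D1`, and `(D2/p)` if
`p ∣ D1` (in which case `p ∤ D2` by coprimality). -/
noncomputable def epsGZ (D1 D2 : ℤ) (p : ℕ) : ℤ :=
  if (p : ℤ) ∣ D1 then kron D2 p else kron D1 p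

/-- `D` is a positive fundamental discriminant: `D > 1` and either `D ≡ 1 (mod 4)` with `D`
squarefree, or `D = 4m` with `m` squarefree and `m ≡ 2` or `3 (mod 4)`. -/
def IsPosFundDisc (D : ℤ) : Prop :=
  1 < D ∧ ((D % 4 = 1 ∧ Squarefree D) ∨
    (∃ m : ℤ, D = 4 * m ∧ Squarefree m ∧ (m % 4 = 2 ∨ m % 4 = 3)))

/-! ### Norm forms and quaternion algebras over a field -/

/-- `b` is a value of the norm form `u² - a v²` of the quadratic étale algebra `K[X]/(X² - a)`.
For `a b ≠ 0` in characteristic other than two this is the triviality of the Hilbert symbol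
`(a, b)`. -/
def IsNormOf {K : Type*} [Field K] (a b : K) : Prop := ∃ u v : K, u ^ 2 - a * v ^ 2 = b

section Algebra

variable {K : Type*} [Field K]

theorem IsNormOf.of_isSquare (h2 : (2 : K) ≠ 0) {c : K} (hc : c ≠ 0) (b : K) :
    IsNormOf (c ^ 2) b := by
  -- The form is hyperbolic: solve `u - c v = 1`, `u + c v = b`.
  refine ⟨(b + 1) / 2, (b - 1) / (2 * c), ?_⟩
  field_simp
  ring

theorem IsNormOf.div {a b c d e : K} (h : c ^ 2 - a * d ^ 2 ≠ 0)
    (hb : b * (c ^ 2 - a * d ^ 2) = e) (he : IsNormOf a e) : IsNormOf a b := by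
  obtain ⟨u, v, rfl⟩ := he
  refine ⟨(u * c - a * v * d) / (c ^ 2 - a * d ^ 2),
    (v * c - u * d) / (c ^ 2 - a * d ^ 2), ?_⟩
  rw [div_pow, div_pow, ← mul_div_assoc, ← sub_div, div_eq_iff (pow_ne_zero 2 h)]
  linear_combination (-(c ^ 2 - a * d ^ 2)) * hb

theorem isNormOf_mul_sq {a b c : K} (hc : c ≠ 0) : IsNormOf a (c ^ 2 * b) ↔ IsNormOf a b := by
  constructor
  · intro h
    exact IsNormOf.div (c := c) (d := 0) (by simpa using hc) (by ring) h
  · rintro ⟨u, v, rfl⟩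
    exact ⟨c * u, c * v, by ring⟩

theorem IsNormOf.symm (h2 : (2 : K) ≠ 0) {a b : K} (hb : b ≠ 0) (h : IsNormOf a b) :
    IsNormOf b a := by
  obtain ⟨u, v, h⟩ := h
  by_cases hv : v = 0
  · obtain rfl : u ^ 2 = b := by simpa [hv] using h
    exact IsNormOf.of_isSquare h2 (by rintro rfl; simp at hb) a
  · refine ⟨u / v, 1 / v, ?_⟩
    field_simp
    linear_combination h

/-- The symbols `(d₁, n)` and `(d₂, n)` agree because `d₁ d₂ = x² - n` is a norm
from `K(√n)`. -/
theorem isNormOf_comm_of_mul_eq (h2 : (2 : K) ≠ 0) {d₁ d₂ n x : K} (h₁ : d₁ ≠ 0) (hn : n ≠ 0)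
    (hx : x ^ 2 - n = d₁ * d₂) (h : IsNormOf d₁ n) : IsNormOf d₂ n := by
  by_cases h₂ : d₂ = 0
  · refine ⟨x, 0, ?_⟩
    rw [h₂] at hx ⊢
    linear_combination hx
  obtain ⟨c, d, hcd⟩ := h.symm h2 hn
  have : IsNormOf n d₂ := by
    refine IsNormOf.div (c := c) (d := d) (by rw [hcd]; exact h₁) rfl ⟨x, 1, ?_⟩
    rw [hcd]
    linear_combination hx
  exact this.symm h2 h₂

/-- A quaternion algebra `(a, b)` is a division ring exactly when `b` is not a norm
from `K(√a)`. -/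
theorem quaternion_division_iff (h2 : (2 : K) ≠ 0) {a b : K} (ha : a ≠ 0) :
    (∀ z : ℍ[K, a, b], z ≠ 0 → IsUnit z) ↔ ¬ IsNormOf a b := by
  constructor
  · rintro h ⟨u, v, huv⟩
    -- The element `u + v i + j` has reduced norm `u² - a v² - b = 0`.
    set z : ℍ[K, a, b] := ⟨u, v, 1, 0⟩ with hz
    set w : ℍ[K, a, b] := ⟨u, -v, -1, 0⟩ with hw
    have hz0 : z ≠ 0 := fun h0 => by
      have := congrArg QuaternionAlgebra.imJ h0
      simp [hz] at this
    have hw0 : w ≠ 0 := fun h0 => by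
      have := congrArg QuaternionAlgebra.imJ h0
      simp [hw] at this
    have hzw : z * w = 0 := by
      ext <;> simp [hz, hw]
      · linear_combination huv
      · ring
    exact hw0 ((h z hz0).mul_right_eq_zero.1 hzw)
  · intro h z hz
    obtain ⟨r, i, j, k⟩ := z
    by_cases hN : r ^ 2 - a * i ^ 2 - b * (j ^ 2 - a * k ^ 2) = 0
    · exfalso
      have hsq : ∀ s t : K, s ^ 2 - a * t ^ 2 = 0 → s = 0 ∧ t = 0 := by
        intro s t hst
        by_cases ht : t = 0
        · subst ht
          simpa using hst
        · exfalso
          apply h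
          have hs : s ≠ 0 := by
            rintro rfl
            simp [ha, ht] at hst
          have : a = (s / t) ^ 2 := by
            field_simp
            linear_combination -hst
          rw [this]
          exact IsNormOf.of_isSquare h2 (div_ne_zero hs ht) b
      by_cases hjk : j ^ 2 - a * k ^ 2 = 0
      · obtain ⟨rfl, rfl⟩ := hsq j k hjk
        obtain ⟨rfl, rfl⟩ := hsq r i (by simpa using hN)
        exact hz rfl
      · exact h (IsNormOf.div hjk rfl ⟨r, i, by linear_combination hN⟩)
    · set N := r ^ 2 - a * i ^ 2 - b * (j ^ 2 - a * k ^ 2) with hNdef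
      refine isUnit_iff_exists.2 ⟨(⟨r / N, -i / N, -j / N, -k / N⟩ : ℍ[K, a, b]), ?_, ?_⟩ <;>
      · ext <;> simp <;> field_simp <;> rw [hNdef] <;> ring

end Algebra

/-! ### Unramified symbols over the `p`-adic numbers -/

theorem kron_eq_one_or_neg_one {p : ℕ} {D : ℤ} (hD : ¬ (p : ℤ) ∣ D) :
    kron D p = 1 ∨ kron D p = -1 := by
  unfold kron
  split_ifs with h1 h2 <;> simp_all

section Local

variable {p : ℕ} [Fact p.Prime]

theorem toZMod_eq_zero_iff (z : ℤ_[p]) : PadicInt.toZMod z = 0 ↔ (p : ℤ_[p]) ∣ z := by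
  rw [← RingHom.mem_ker, PadicInt.ker_toZMod, PadicInt.maximalIdeal_eq_span_p,
    Ideal.mem_span_singleton]

/-- Hensel's lemma for a monic quadratic polynomial with a simple root modulo `p`. -/
theorem hensel_quadratic (t e a : ℤ_[p]) (h0 : (p : ℤ_[p]) ∣ a ^ 2 + t * a + e)
    (h1 : ¬ (p : ℤ_[p]) ∣ 2 * a + t) : ∃ z : ℤ_[p], z ^ 2 + t * z + e = 0 := by
  have hd : ‖2 * a + t‖ = 1 := by
    rw [← PadicInt.norm_lt_one_iff_dvd, not_lt] at h1
    exact le_antisymm (PadicInt.norm_le_one _) h1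
  have := hensels_lemma (p := p) (R := ℤ_[p])
    (F := Polynomial.X ^ 2 + Polynomial.C t * Polynomial.X + Polynomial.C e) (a := a) (by
      simpa [one_add_one_eq_two, hd] using (PadicInt.norm_lt_one_iff_dvd _).2 h0)
  obtain ⟨z, hz, -⟩ := this
  exact ⟨z, by simpa using hz⟩

theorem isUnit_of_not_dvd {w : ℤ_[p]} (hw : ¬ (p : ℤ_[p]) ∣ w) : IsUnit w := by
  rw [PadicInt.isUnit_iff]
  rw [← PadicInt.norm_lt_one_iff_dvd, not_lt] at hw
  exact le_antisymm (PadicInt.norm_le_one _) hw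

theorem toZMod_surjective (y : ZMod p) : ∃ z : ℤ_[p], PadicInt.toZMod z = y :=
  ZMod.ringHom_surjective PadicInt.toZMod y

/-- For odd `p` and a unit `D`, every unit is a value of `u² - D v²`: solve the equation
modulo `p` by counting and lift whichever variable is nonzero modulo `p`. -/
theorem exists_norm_unit_odd (hp : p ≠ 2) {D w : ℤ_[p]} (hD : ¬ (p : ℤ_[p]) ∣ D)
    (hw : ¬ (p : ℤ_[p]) ∣ w) : ∃ u v : ℤ_[p], u ^ 2 - D * v ^ 2 = w := by
  have hpp : p.Prime := Fact.out
  have h2 : (2 : ZMod p) ≠ 0 := by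
    intro h
    have : ((2 : ℕ) : ZMod p) = 0 := by exact_mod_cast h
    rw [ZMod.natCast_eq_zero_iff] at this
    exact hp ((Nat.prime_dvd_prime_iff_eq hpp Nat.prime_two).1 this)
  set φ : ℤ_[p] →+* ZMod p := PadicInt.toZMod with hφ
  have hD' : φ D ≠ 0 := fun h => hD ((toZMod_eq_zero_iff _).1 h)
  have hw' : φ w ≠ 0 := fun h => hw ((toZMod_eq_zero_iff _).1 h)
  obtain ⟨a, b, hab⟩ := FiniteField.exists_root_sum_quadratic (R := ZMod p)
    (f := Polynomial.C 1 * Polynomial.X ^ 2 + Polynomial.C 0 * Polynomial.X + Polynomial.C 0)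
    (g := Polynomial.C (-φ D) * Polynomial.X ^ 2 + Polynomial.C 0 * Polynomial.X
      + Polynomial.C (-φ w))
    (Polynomial.degree_quadratic one_ne_zero) (Polynomial.degree_quadratic (neg_ne_zero.2 hD'))
    (by rw [ZMod.card]; exact hpp.eq_two_or_odd.resolve_left hp)
  obtain ⟨A, rfl⟩ := toZMod_surjective a
  obtain ⟨B, rfl⟩ := toZMod_surjective b
  rw [← hφ] at hab
  simp only [Polynomial.eval_add, Polynomial.eval_mul, Polynomial.eval_C, Polynomial.eval_pow,
    Polynomial.eval_X] at hab
  by_cases hA : φ A = 0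
  · have hB : φ B ≠ 0 := by
      intro hB
      rw [hA, hB] at hab
      apply hw'
      linear_combination -hab
    obtain ⟨E, hE⟩ := (isUnit_of_not_dvd hD).exists_right_inv
    have hE' : φ D * φ E = 1 := by rw [← map_mul, hE, map_one]
    obtain ⟨z, hz⟩ := hensel_quadratic 0 (-(E * (A ^ 2 - w))) B
      ((toZMod_eq_zero_iff _).1 (by
        rw [← hφ]
        simp only [map_add, map_mul, map_neg, map_sub, map_pow, map_zero]
        linear_combination -(φ E) * hab - (φ B) ^ 2 * hE'))
      (fun h => by
        have := (toZMod_eq_zero_iff _).2 h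
        rw [← hφ] at this
        simp only [map_mul, map_ofNat, add_zero, mul_eq_zero, h2, hB, or_self] at this)
    exact ⟨A, z, by linear_combination -D * hz - (A ^ 2 - w) * hE⟩
  · obtain ⟨z, hz⟩ := hensel_quadratic 0 (-(w + D * B ^ 2)) A
      ((toZMod_eq_zero_iff _).1 (by
        rw [← hφ]
        simp only [map_add, map_mul, map_neg, map_pow, map_zero]
        linear_combination hab))
      (fun h => by
        have := (toZMod_eq_zero_iff _).2 h
        rw [← hφ] at this
        simp only [map_mul, map_ofNat, add_zero, mul_eq_zero, h2, hA, or_self] at this)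
    exact ⟨z, B, by linear_combination hz⟩

/-- A nonzero `p`-adic number of even valuation is a square times a unit. -/
theorem exists_unit_mul_sq {n : ℚ_[p]} (hn : n ≠ 0) (he : Even n.valuation) :
    ∃ (c : ℚ_[p]) (w : ℤ_[p]), c ≠ 0 ∧ ¬ (p : ℤ_[p]) ∣ w ∧ n = c ^ 2 * w := by
  obtain ⟨k, hk⟩ := he
  have hp0 : (p : ℚ_[p]) ≠ 0 := by
    exact_mod_cast (Fact.out : p.Prime).ne_zero
  have hc : (p : ℚ_[p]) ^ k ≠ 0 := zpow_ne_zero _ hp0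
  have hnorm : ‖n / ((p : ℚ_[p]) ^ k) ^ 2‖ = 1 := by
    have hp1 : (p : ℝ) ≠ 0 := by exact_mod_cast (Fact.out : p.Prime).ne_zero
    rw [norm_div, norm_pow, norm_zpow, Padic.norm_p, Padic.norm_eq_zpow_neg_valuation hn, hk,
      inv_zpow', ← zpow_natCast, ← zpow_mul, div_eq_one_iff_eq (zpow_ne_zero _ hp1)]
    congr 1
    push_cast
    ring
  obtain ⟨w, hw⟩ : ∃ w : ℤ_[p], (w : ℚ_[p]) = n / ((p : ℚ_[p]) ^ k) ^ 2 :=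
    ⟨⟨_, hnorm.le⟩, rfl⟩
  refine ⟨(p : ℚ_[p]) ^ k, w, hc, ?_, ?_⟩
  · rw [← PadicInt.norm_lt_one_iff_dvd, PadicInt.norm_def, hw, hnorm]
    exact lt_irrefl 1
  · rw [hw]
    field_simp

/-- Values of a binary quadratic form that is anisotropic modulo `p` have even valuation:
after dividing by the larger variable the form becomes a unit. -/
theorem even_valuation_of_anisotropic (t c : ℤ_[p])
    (h : ∀ u v : ℤ_[p], (p : ℤ_[p]) ∣ u ^ 2 + t * u * v + c * v ^ 2 →
      (p : ℤ_[p]) ∣ u ∧ (p : ℤ_[p]) ∣ v)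
    (u v : ℚ_[p]) (h0 : u ^ 2 + t * u * v + c * v ^ 2 ≠ 0) :
    Even (u ^ 2 + t * u * v + c * v ^ 2).valuation := by
  have hp1 : ¬ (p : ℤ_[p]) ∣ 1 := by
    rw [← PadicInt.norm_lt_one_iff_dvd]
    simp
  have key : ∀ (s : ℚ_[p]) (w : ℤ_[p]), s ≠ 0 → ¬ (p : ℤ_[p]) ∣ w →
      Even (s ^ 2 * (w : ℚ_[p])).valuation := by
    intro s w hs hw
    have hw1 := PadicInt.isUnit_iff.1 (isUnit_of_not_dvd hw)
    have hw0 : (w : ℚ_[p]) ≠ 0 := by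
      rintro h
      rw [PadicInt.norm_def, h] at hw1
      simp at hw1
    have hwv : (w : ℚ_[p]).valuation = 0 := by
      have h1 := Padic.norm_eq_zpow_neg_valuation hw0
      rw [← PadicInt.norm_def, hw1] at h1
      have hp : (1 : ℝ) < p := by exact_mod_cast (Fact.out : p.Prime).one_lt
      have := (zpow_eq_one_iff_right₀ (by linarith) hp.ne').1 h1.symm
      omega
    rw [Padic.valuation_mul (pow_ne_zero _ hs) hw0, Padic.valuation_pow, hwv]
    simp
  rcases le_total ‖v‖ ‖u‖ with hle | hle
  · have hu : u ≠ 0 := by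
      rintro rfl
      have : v = 0 := by simpa using hle
      simp [this] at h0
    have hq : ‖v / u‖ ≤ 1 := by
      rw [norm_div]
      exact div_le_one_of_le₀ hle (norm_nonneg _)
    set q : ℤ_[p] := ⟨v / u, hq⟩ with hqdef
    have := key u (1 ^ 2 + t * 1 * q + c * q ^ 2) hu (fun hd => hp1 (h _ _ hd).1)
    convert this using 2
    push_cast
    rw [hqdef]
    field_simp
  · have hv : v ≠ 0 := by
      rintro rfl
      have : u = 0 := by simpa using hle
      simp [this] at h0
    have hq : ‖u / v‖ ≤ 1 := by
      rw [norm_div]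
      exact div_le_one_of_le₀ hle (norm_nonneg _)
    set q : ℤ_[p] := ⟨u / v, hq⟩ with hqdef
    have := key v (q ^ 2 + t * q * 1 + c * 1 ^ 2) hv (fun hd => hp1 (h _ _ hd).2)
    convert this using 2
    push_cast
    rw [hqdef]
    field_simp

theorem intCast_dvd_iff (z : ℤ) : (p : ℤ_[p]) ∣ (z : ℤ_[p]) ↔ (p : ℤ) ∣ z := by
  rw [← PadicInt.norm_lt_one_iff_dvd, PadicInt.norm_int_lt_one_iff_dvd]

/-- The Hilbert symbol `(D, n)` at an odd prime not dividing `D`: it is trivial exactly when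
`n` has even valuation or `D` is a local square. -/
theorem isNormOf_iff_odd (hp : p ≠ 2) {D : ℤ} (hD : ¬ (p : ℤ) ∣ D) {n : ℚ_[p]} (hn : n ≠ 0) :
    IsNormOf (D : ℚ_[p]) n ↔ (Even n.valuation ∨ kron D p = 1) := by
  have hpp : p.Prime := Fact.out
  have hk : kron D p = if ∃ y : ℤ, (p : ℤ) ∣ (y ^ 2 - D) then 1 else -1 := by
    simp [kron, hp, hD]
  constructor
  · rintro ⟨u, v, huv⟩
    by_contra! hcon
    obtain ⟨hodd, hkr⟩ := hcon
    have hno : ¬ ∃ y : ℤ, (p : ℤ) ∣ (y ^ 2 - D) := by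
      intro hy
      rw [hk, if_pos hy] at hkr
      exact hkr rfl
    have huv' : u ^ 2 + ((0 : ℤ_[p]) : ℚ_[p]) * u * v + ((-D : ℤ_[p]) : ℚ_[p]) * v ^ 2 = n := by
      rw [← huv]
      push_cast
      ring
    have := even_valuation_of_anisotropic (p := p) 0 (-D) ?_ u v (by rw [huv']; exact hn)
    · rw [huv'] at this
      exact hodd this
    · intro u v huv
      simp only [← toZMod_eq_zero_iff] at huv ⊢
      simp only [map_add, map_mul, map_neg, map_pow, map_zero, map_intCast] at huv
      by_cases hv : PadicInt.toZMod v = 0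
      · rw [hv] at huv
        exact ⟨by simpa using huv, hv⟩
      · exfalso
        obtain ⟨y, hy⟩ := ZMod.intCast_surjective (PadicInt.toZMod u / PadicInt.toZMod v)
        refine hno ⟨y, (ZMod.intCast_zmod_eq_zero_iff_dvd _ _).1 ?_⟩
        push_cast
        rw [hy]
        field_simp
        linear_combination huv
  · intro h
    have hD' : ¬ (p : ℤ_[p]) ∣ (D : ℤ_[p]) := by rwa [intCast_dvd_iff]
    rcases h with h | h
    · obtain ⟨c, w, hc, hw, rfl⟩ := exists_unit_mul_sq hn h
      rw [isNormOf_mul_sq hc]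
      obtain ⟨u, v, huv⟩ := exists_norm_unit_odd hp hD' hw
      exact ⟨u, v, by rw [← huv]; push_cast; ring⟩
    · rw [hk] at h
      split_ifs at h with hy
      obtain ⟨y, hy⟩ := hy
      obtain ⟨z, hz⟩ := hensel_quadratic (p := p) 0 (-D) y (by
          rw [← intCast_dvd_iff] at hy
          push_cast at hy
          simpa [sub_eq_add_neg] using hy) (by
        intro hd
        have hd' : (p : ℤ_[p]) ∣ ((2 * y : ℤ) : ℤ_[p]) := by simpa using hd
        rw [intCast_dvd_iff] at hd'
        rcases Int.Prime.dvd_mul' hpp hd' with h2 | hyd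
        · have : p ∣ 2 := by exact_mod_cast h2
          exact hp ((Nat.prime_dvd_prime_iff_eq hpp Nat.prime_two).1 this)
        · exact hD ((dvd_sub_right (Dvd.dvd.pow hyd two_ne_zero)).1 hy))
      have hz' : ((z : ℚ_[p])) ^ 2 = D := by
        have : z ^ 2 = (D : ℤ_[p]) := by linear_combination hz
        have := congrArg (fun w : ℤ_[p] => (w : ℚ_[p])) this
        simpa using this
      rw [← hz']
      refine IsNormOf.of_isSquare two_ne_zero ?_ n
      intro h0
      rw [h0] at hz'
      have : (D : ℚ_[p]) = 0 := by rw [← hz']; simp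
      have : D = 0 := by exact_mod_cast this
      exact hD (this ▸ dvd_zero _)

end Local

/-- The Hilbert symbol `(D, n)` at the prime two for `D ≡ 1 (mod 4)`. The norm form is
rewritten as `u² + u v + c v²` with `c = (1 - D) / 4`, the norm form of the maximal order. -/
theorem isNormOf_iff_two {D : ℤ} (hD : D % 4 = 1) {n : ℚ_[2]}
    (hn : n ≠ 0) :
    IsNormOf (D : ℚ_[2]) n ↔ (Even n.valuation ∨ kron D 2 = 1) := by
  obtain ⟨c, rfl⟩ : ∃ c : ℤ, D = 1 - 4 * c := ⟨(1 - D) / 4, by omega⟩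
  have hk : kron (1 - 4 * c) 2 = if c % 2 = 0 then 1 else -1 := by
    unfold kron
    split_ifs <;> omega
  have hlift : ∀ e : ℤ_[2], ((2 : ℕ) : ℤ_[2]) ∣ e → ∃ z : ℤ_[2], z ^ 2 + z + e = 0 := by
    intro e he
    have hone : ¬ ((2 : ℕ) : ℤ_[2]) ∣ 1 := by
      rw [← PadicInt.norm_lt_one_iff_dvd]
      simp
    obtain ⟨z, hz⟩ := hensel_quadratic (p := 2) 1 e 0 (by simpa using he) (by simpa using hone)
    exact ⟨z, by linear_combination hz⟩
  have htwo : ∀ a b : ZMod 2, a ^ 2 + 1 * a * b + 1 * b ^ 2 = 0 → a = 0 ∧ b = 0 := by decide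
  have hsplit : c % 2 = 0 → IsNormOf ((1 - 4 * c : ℤ) : ℚ_[2]) n := by
    intro hc
    obtain ⟨z, hz⟩ := hlift c ((intCast_dvd_iff (p := 2) c).2 (by push_cast; omega))
    -- `z² + z + c = 0` means `(2 z + 1)² = 1 - 4 c = D`.
    have hz' : (2 * (z : ℚ_[2]) + 1) ^ 2 = ((1 - 4 * c : ℤ) : ℚ_[2]) := by
      have := congrArg (fun w : ℤ_[2] => (w : ℚ_[2])) hz
      push_cast at this ⊢
      linear_combination 4 * this
    rw [← hz']
    refine IsNormOf.of_isSquare two_ne_zero ?_ n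
    intro h0
    rw [h0] at hz'
    have : (1 - 4 * c : ℤ) = 0 := by
      have : ((1 - 4 * c : ℤ) : ℚ_[2]) = 0 := by rw [← hz']; simp
      exact_mod_cast this
    omega
  constructor
  · rintro ⟨u, v, huv⟩
    by_contra! hcon
    obtain ⟨hodd, hkr⟩ := hcon
    have hc : c % 2 = 1 := by
      by_contra hc
      rw [hk, if_pos (by omega)] at hkr
      exact hkr rfl
    -- `u² - D v²` is the value of `X² + X Y + c Y²` at `(u - v, 2 v)`.
    have huv' : (u - v) ^ 2 + ((1 : ℤ_[2]) : ℚ_[2]) * (u - v) * (2 * v)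
        + ((c : ℤ_[2]) : ℚ_[2]) * (2 * v) ^ 2 = n := by
      rw [← huv]
      push_cast
      ring
    have := even_valuation_of_anisotropic (p := 2) 1 c ?_ _ _ (by rw [huv']; exact hn)
    · rw [huv'] at this
      exact hodd this
    · intro u v huv
      simp only [← toZMod_eq_zero_iff] at huv ⊢
      have hc' : (c : ZMod 2) = 1 := by
        rw [← Int.cast_one, ZMod.intCast_eq_intCast_iff]
        exact hc
      simp only [map_add, map_mul, map_pow, map_one, map_intCast, hc'] at huv
      exact htwo _ _ huv
  · intro h
    by_cases hc : c % 2 = 0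
    · exact hsplit hc
    have h : Even n.valuation := by
      rw [hk, if_neg hc] at h
      exact h.resolve_right (by decide)
    obtain ⟨s, w, hs, hw, rfl⟩ := exists_unit_mul_sq hn h
    rw [isNormOf_mul_sq hs]
    obtain ⟨z, hz⟩ := hlift (c - w) (by
      rw [← toZMod_eq_zero_iff] at hw ⊢
      have hc' : (c : ZMod 2) = 1 := by
        rw [← Int.cast_one, ZMod.intCast_eq_intCast_iff]
        exact Int.emod_two_eq_zero_or_one c |>.resolve_left hc
      have hne : ∀ a : ZMod 2, a ≠ 0 → 1 - a = 0 := by decide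
      rw [map_sub, map_intCast, hc']
      exact hne _ hw)
    -- The point `(X, Y) = (z, 1)` of `X² + X Y + c Y² = w` in the original coordinates.
    refine ⟨z + 1 / 2, 1 / 2, ?_⟩
    have := congrArg (fun w : ℤ_[2] => (w : ℚ_[2])) hz
    push_cast at this ⊢
    linear_combination this

/-! ### The local symbols attached to two fundamental discriminants -/

theorem IsPosFundDisc.mod_four {D : ℤ} (h : IsPosFundDisc D) (h2 : ¬ (2 : ℤ) ∣ D) :
    D % 4 = 1 := by
  rcases h with ⟨-, ⟨h, -⟩ | ⟨m, rfl, -⟩⟩ <;> omega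

theorem IsPosFundDisc.squarefree {D : ℤ} (h : IsPosFundDisc D) (h2 : ¬ (2 : ℤ) ∣ D) :
    Squarefree D := by
  rcases h with ⟨-, ⟨-, h⟩ | ⟨m, rfl, -⟩⟩
  · exact h
  · omega

theorem IsPosFundDisc.not_isSquare {D : ℤ} (h : IsPosFundDisc D) : ¬ IsSquare D := by
  rintro ⟨a, rfl⟩
  rcases h with ⟨h1, ⟨-, h⟩ | ⟨m, hm, hsq, h⟩⟩
  · rcases Int.isUnit_iff.1 (h a dvd_rfl) with rfl | rfl <;> omega
  · -- `m` would be a square, but it is `2` or `3` modulo `4`.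
    obtain ⟨b, rfl⟩ : (2 : ℤ) ∣ a := by
      have : (2 : ℤ) ∣ a * a := ⟨2 * m, by linarith⟩
      exact (Int.prime_two.dvd_mul.1 this).elim id id
    obtain rfl : m = b * b := by linarith
    rcases Int.even_or_odd' b with ⟨c, rfl | rfl⟩ <;> ring_nf at h <;> omega

theorem four_mul_disc_div {D1 D2 x : ℤ} (h1 : IsPosFundDisc D1) (h2 : IsPosFundDisc D2)
    (hx : x % 2 = (D1 * D2) % 2) : 4 * ((D1 * D2 - x ^ 2) / 4) = D1 * D2 - x ^ 2 := by
  apply Int.mul_ediv_cancel'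
  have key : ∀ D : ℤ, IsPosFundDisc D → ∃ k : ℤ, D = 4 * k ∨ D = 4 * k + 1 := by
    rintro D ⟨-, ⟨h, -⟩ | ⟨m, rfl, -⟩⟩
    · exact ⟨D / 4, by omega⟩
    · exact ⟨m, Or.inl rfl⟩
  have hP : ∃ k : ℤ, D1 * D2 = 4 * k ∨ D1 * D2 = 4 * k + 1 := by
    obtain ⟨a, rfl | rfl⟩ := key D1 h1 <;> obtain ⟨b, rfl | rfl⟩ := key D2 h2
    · exact ⟨4 * a * b, Or.inl (by ring)⟩
    · exact ⟨4 * a * b + a, Or.inl (by ring)⟩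
    · exact ⟨4 * a * b + b, Or.inl (by ring)⟩
    · exact ⟨4 * a * b + a + b, Or.inr (by ring)⟩
  obtain ⟨k, hk⟩ := hP
  rcases Int.even_or_odd' x with ⟨c, rfl | rfl⟩
  · have : D1 * D2 = 4 * k := by omega
    exact ⟨k - c ^ 2, by rw [this]; ring⟩
  · have : D1 * D2 = 4 * k + 1 := by omega
    exact ⟨k - c ^ 2 - c, by rw [this]; ring⟩

theorem disc_sub_sq_ne_zero {D1 D2 : ℤ} (x : ℤ) (h1 : IsPosFundDisc D1)
    (hcop : IsCoprime D1 D2) : D1 * D2 - x ^ 2 ≠ 0 := by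
  intro h
  obtain ⟨a, ha | ha⟩ := Int.sq_of_isCoprime hcop (c := x) (by linarith)
  · exact h1.not_isSquare ⟨a, by rw [ha]; ring⟩
  · have := h1.1
    nlinarith [sq_nonneg a]

theorem not_prime_dvd_both {p : ℕ} (hp : p.Prime) {D1 D2 : ℤ} (hcop : IsCoprime D1 D2)
    (h1 : (p : ℤ) ∣ D1) : ¬ (p : ℤ) ∣ D2 := fun h2 =>
  (Nat.prime_iff_prime_int.1 hp).not_isUnit (hcop.isUnit_of_dvd' h1 h2)

theorem epsGZ_eq_one_or_neg_one {p : ℕ} (hp : p.Prime) {D1 D2 : ℤ} (hcop : IsCoprime D1 D2) :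
    epsGZ D1 D2 p = 1 ∨ epsGZ D1 D2 p = -1 := by
  unfold epsGZ
  split_ifs with h
  · exact kron_eq_one_or_neg_one (not_prime_dvd_both hp hcop h)
  · exact kron_eq_one_or_neg_one h

/-- The Hilbert symbol `(D, -4m)` at a prime where the fundamental discriminant `D`
is unramified. -/
theorem not_isNormOf_iff {p : ℕ} [Fact p.Prime] {D m : ℤ} (h : IsPosFundDisc D)
    (hD : ¬ (p : ℤ) ∣ D) (hm : m ≠ 0) :
    ¬ IsNormOf (D : ℚ_[p]) ((-(4 * m) : ℤ) : ℚ_[p]) ↔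
      (Odd (padicValInt p m) ∧ kron D p = -1) := by
  have e : ((-(4 * m) : ℤ) : ℚ_[p]) = 2 ^ 2 * ((-m : ℤ) : ℚ_[p]) := by push_cast; ring
  have hm' : ((-m : ℤ) : ℚ_[p]) ≠ 0 := by exact_mod_cast neg_ne_zero.2 hm
  have hv : ((-m : ℤ) : ℚ_[p]).valuation = (padicValInt p m : ℤ) := by
    rw [Padic.valuation_intCast, padicValInt, padicValInt, Int.natAbs_neg]
  have key : IsNormOf (D : ℚ_[p]) ((-m : ℤ) : ℚ_[p]) ↔
      (Even ((-m : ℤ) : ℚ_[p]).valuation ∨ kron D p = 1) := by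
    by_cases hp : p = 2
    · subst hp
      exact isNormOf_iff_two (h.mod_four (by simpa using hD)) hm'
    · exact isNormOf_iff_odd hp hD hm'
  rw [e, isNormOf_mul_sq two_ne_zero, key, hv, Int.even_coe_nat, not_or, Nat.not_even_iff_odd]
  refine and_congr_right fun _ => ?_
  rcases kron_eq_one_or_neg_one hD with h | h <;> rw [h] <;> decide

theorem isNormOf_disc_comm {p : ℕ} [Fact p.Prime] {D1 D2 x m : ℤ} (h1 : IsPosFundDisc D1)
    (h2 : IsPosFundDisc D2) (hm : m ≠ 0) (hxm : 4 * m = D1 * D2 - x ^ 2) :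
    IsNormOf (D1 : ℚ_[p]) ((-(4 * m) : ℤ) : ℚ_[p]) ↔
      IsNormOf (D2 : ℚ_[p]) ((-(4 * m) : ℤ) : ℚ_[p]) := by
  have hD1 : (D1 : ℚ_[p]) ≠ 0 := by
    have := h1.1
    exact_mod_cast (by omega : D1 ≠ 0)
  have hD2 : (D2 : ℚ_[p]) ≠ 0 := by
    have := h2.1
    exact_mod_cast (by omega : D2 ≠ 0)
  have hn : ((-(4 * m) : ℤ) : ℚ_[p]) ≠ 0 := by exact_mod_cast (by omega : -(4 * m) ≠ 0)
  have hmul : (x : ℚ_[p]) ^ 2 - ((-(4 * m) : ℤ) : ℚ_[p]) = D1 * D2 := by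
    exact_mod_cast (by linarith : x ^ 2 - (-(4 * m)) = D1 * D2)
  exact ⟨isNormOf_comm_of_mul_eq two_ne_zero hD1 hn hmul,
    isNormOf_comm_of_mul_eq two_ne_zero hD2 hn (by rw [hmul, mul_comm])⟩

/-- The local statement: `(D₁, x² - D₁ D₂)` is nontrivial at `p` exactly when `v_p(m)` is odd
and `ε(p) = -1`. When `p ∣ D₁` one passes to `D₂`, which is unramified at `p`. -/
theorem local_symbol {p : ℕ} [Fact p.Prime] {D1 D2 x m : ℤ} (h1 : IsPosFundDisc D1)
    (h2 : IsPosFundDisc D2) (hcop : IsCoprime D1 D2) (hm : m ≠ 0)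
    (hxm : 4 * m = D1 * D2 - x ^ 2) :
    ¬ IsNormOf (D1 : ℚ_[p]) ((-(4 * m) : ℤ) : ℚ_[p]) ↔
      (Odd (padicValInt p m) ∧ epsGZ D1 D2 p = -1) := by
  unfold epsGZ
  split_ifs with h
  · rw [← not_isNormOf_iff h2 (not_prime_dvd_both Fact.out hcop h) hm, not_iff_not]
    exact isNormOf_disc_comm h1 h2 hm hxm
  · exact not_isNormOf_iff h1 h hm

/-! ### The product formula via quadratic reciprocity -/

/-- The completely multiplicative extension to positive integers of a function on primes,
`n ↦ ∏ E(p) ^ v_p(n)`. Its value at `0` is the junk value `1`. -/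
def multExt (E : ℕ → ℤ) (n : ℕ) : ℤ := n.factorization.prod fun p k => E p ^ k

theorem multExt_mul (E : ℕ → ℤ) {a b : ℕ} (ha : a ≠ 0) (hb : b ≠ 0) :
    multExt E (a * b) = multExt E a * multExt E b := by
  unfold multExt
  rw [Nat.factorization_mul ha hb]
  exact Finsupp.prod_add_index' (fun _ => pow_zero _) (fun _ _ _ => pow_add _ _ _)

theorem multExt_eq (E f : ℕ → ℤ) (hf1 : f 1 = 1)
    (hf : ∀ a b : ℕ, a ≠ 0 → b ≠ 0 → f (a * b) = f a * f b) :
    ∀ n : ℕ, n ≠ 0 → (∀ p : ℕ, p.Prime → p ∣ n → E p = f p) → multExt E n = f n := by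
  intro n
  induction n using Nat.recOnMul with
  | zero => intro h; exact absurd rfl h
  | one => intro _ _; simp [multExt, hf1]
  | prime p hp =>
    intro _ h
    rw [← h p hp dvd_rfl]
    simp [multExt, hp.factorization]
  | mul a b iha ihb =>
    intro h0 h
    have ha : a ≠ 0 := left_ne_zero_of_mul h0
    have hb : b ≠ 0 := right_ne_zero_of_mul h0
    rw [multExt_mul E ha hb, hf a b ha hb,
      iha ha fun p hp hd => h p hp (hd.mul_right b),
      ihb hb fun p hp hd => h p hp (hd.mul_left a)]

/-- For a sign-valued `E`, the multiplicative extension at `n` counts the primes of odd exponent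
with sign `-1`. -/
theorem multExt_eq_neg_one_pow (E : ℕ → ℤ) (hE : ∀ p : ℕ, p.Prime → E p = 1 ∨ E p = -1) (n : ℕ) :
    multExt E n =
      (-1) ^ (n.primeFactors.filter fun p => Odd (n.factorization p) ∧ E p = -1).card := by
  unfold multExt
  rw [Finsupp.prod, Nat.support_factorization, ← Finset.prod_const, Finset.prod_filter]
  refine Finset.prod_congr rfl fun p hp => ?_
  rcases hE p (Nat.prime_of_mem_primeFactors hp) with h | h
  · simp [h]
  · rcases Nat.even_or_odd (n.factorization p) with hv | hv
    · simp [h, hv]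
    · simp [h, hv]

theorem kron_eq_jacobiSym {p : ℕ} (hp : p.Prime) (hp2 : p ≠ 2) {D : ℤ} (hD : ¬ (p : ℤ) ∣ D) :
    kron D p = jacobiSym D p := by
  have := Fact.mk hp
  have hD0 : (D : ZMod p) ≠ 0 := fun h => hD ((ZMod.intCast_zmod_eq_zero_iff_dvd _ _).1 h)
  have hk : kron D p = if ∃ y : ℤ, (p : ℤ) ∣ (y ^ 2 - D) then 1 else -1 := by
    simp [kron, hp2, hD]
  have hiff : (∃ y : ℤ, (p : ℤ) ∣ (y ^ 2 - D)) ↔ IsSquare (D : ZMod p) := by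
    constructor
    · rintro ⟨y, hy⟩
      have := (ZMod.intCast_zmod_eq_zero_iff_dvd _ _).2 hy
      push_cast at this
      exact ⟨y, by linear_combination -this⟩
    · rintro ⟨y, hy⟩
      obtain ⟨z, rfl⟩ := ZMod.intCast_surjective y
      refine ⟨z, (ZMod.intCast_zmod_eq_zero_iff_dvd _ _).1 ?_⟩
      push_cast
      linear_combination -hy
  rw [hk, ← jacobiSym.legendreSym.to_jacobiSym]
  split_ifs with h
  · exact ((legendreSym.eq_one_iff p hD0).2 (hiff.1 h)).symm
  · exact ((legendreSym.eq_neg_one_iff p).2 fun h' => h (hiff.2 h')).symm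

/-- Quadratic reciprocity, with its supplement at two, for a positive discriminant
`d ≡ 1 (mod 4)`. -/
theorem kron_eq_jacobiSym_flip {p : ℕ} (hp : p.Prime) {d : ℕ} (hd : d % 4 = 1)
    (hpd : ¬ (p : ℤ) ∣ (d : ℤ)) : kron d p = jacobiSym p d := by
  by_cases hp2 : p = 2
  · subst hp2
    have h8 : d % 8 = 1 ∨ d % 8 = 5 := by omega
    have hodd : Odd d := Nat.odd_iff.2 (by omega)
    rw [Nat.cast_two, jacobiSym.at_two hodd, ZMod.χ₈_nat_eq_if_mod_eight]
    unfold kron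
    rcases h8 with h | h
    · have h' : (d : ℤ) % 8 = 1 := by omega
      have h2 : (d : ℤ) % 2 ≠ 0 := by omega
      simp [h, h', h2, show d % 2 ≠ 0 by omega]
    · have h' : (d : ℤ) % 8 = 5 := by omega
      have h2 : (d : ℤ) % 2 ≠ 0 := by omega
      simp [h, h', h2, show d % 2 ≠ 0 by omega]
  · rw [kron_eq_jacobiSym hp hp2 hpd]
    exact jacobiSym.quadratic_reciprocity_one_mod_four hd (hp.odd_of_ne_two hp2)

/-- If `g h ≡ 1 (mod 4)`, then `g` and `h` are both `1` or both `3` modulo `4`, and the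
reciprocity sign of `(h/g)(g/h)` equals the sign `(-1/h)`. -/
theorem jacobiSym_flip_mul {g h : ℕ} (hgh : (g * h) % 4 = 1) (hc : Nat.Coprime g h) :
    jacobiSym h g * jacobiSym (-g) h = 1 := by
  have hsq : jacobiSym g h ^ 2 = 1 := jacobiSym.sq_one (by simpa using hc)
  have hcase : (g % 4 = 1 ∧ h % 4 = 1) ∨ (g % 4 = 3 ∧ h % 4 = 3) := by
    have h4 := Nat.mul_mod g h 4
    rw [hgh] at h4
    have hg : g % 4 < 4 := Nat.mod_lt _ (by norm_num)
    have hh : h % 4 < 4 := Nat.mod_lt _ (by norm_num)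
    generalize g % 4 = a at *
    generalize h % 4 = b at *
    interval_cases a <;> interval_cases b <;> omega
  rcases hcase with ⟨hg, hh⟩ | ⟨hg, hh⟩
  · have ho : Odd h := Nat.odd_iff.2 (by omega)
    rw [jacobiSym.neg _ ho, ZMod.χ₄_nat_one_mod_four hh,
      jacobiSym.quadratic_reciprocity_one_mod_four hh (Nat.odd_iff.2 (by omega))]
    linear_combination hsq
  · have ho : Odd h := Nat.odd_iff.2 (by omega)
    rw [jacobiSym.neg _ ho, ZMod.χ₄_nat_three_mod_four hh,
      jacobiSym.quadratic_reciprocity_three_mod_four hh hg]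
    linear_combination hsq

/-- The product formula: `ε(|m|) = 1`, where `D₁ = d` is odd and `ε` is extended
multiplicatively. With
`g = gcd(d, x)`, `d = g h`, `x = g y` and `m = g m'`, the primes dividing `g` contribute `(D₂/g)`,
the primes dividing `m'` contribute `(m'/d)`, and `4 m' = h D₂ - g y²` reduces the product
to quadratic reciprocity for `g` and `h`. -/
theorem multExt_epsGZ_eq_one {d : ℕ} {D2 x m : ℤ} (hd : d % 4 = 1) (hsq : Squarefree d)
    (hcop : IsCoprime (d : ℤ) D2) (hm : m ≠ 0) (hxm : 4 * m = d * D2 - x ^ 2) :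
    multExt (epsGZ d D2) m.natAbs = 1 := by
  have hd0 : 0 < d := by omega
  set g := Nat.gcd d x.natAbs with hg
  have hg0 : 0 < g := Nat.gcd_pos_of_pos_left _ hd0
  obtain ⟨h, hh⟩ : g ∣ d := Nat.gcd_dvd_left _ _
  obtain ⟨y, hy⟩ : (g : ℤ) ∣ x := Int.natCast_dvd.2 (Nat.gcd_dvd_right _ _)
  have hgh : Nat.Coprime g h := Nat.coprime_of_squarefree_mul (hh ▸ hsq)
  have hyh : Int.gcd y h = 1 := by
    have h1 := Nat.coprime_div_gcd_div_gcd (m := d) (n := x.natAbs) (hg ▸ hg0)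
    rw [← hg, hy, Int.natAbs_mul, Int.natAbs_natCast, Nat.mul_div_cancel_left _ hg0] at h1
    have h2 : d / g = h := by rw [hh]; exact Nat.mul_div_cancel_left _ hg0
    rw [h2] at h1
    rw [Int.gcd_comm]
    simpa [Int.gcd] using h1
  have hgo : g % 2 = 1 := by
    rcases Nat.mod_two_eq_zero_or_one g with h0 | h0
    · obtain ⟨k, hk⟩ := Nat.dvd_of_mod_eq_zero h0
      rw [hk, mul_assoc] at hh
      omega
    · exact h0
  have hho : h % 2 = 1 := by
    rcases Nat.mod_two_eq_zero_or_one h with h0 | h0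
    · obtain ⟨k, hk⟩ := Nat.dvd_of_mod_eq_zero h0
      rw [hk, mul_left_comm] at hh
      omega
    · exact h0
  have hdZ : (d : ℤ) = g * h := by exact_mod_cast hh
  have hg4 : IsCoprime (g : ℤ) 4 := by
    rw [Int.isCoprime_iff_gcd_eq_one]
    have : Nat.Coprime g (2 ^ 2) := (Nat.coprime_two_right.2 (Nat.odd_iff.2 hgo)).pow_right 2
    exact_mod_cast this
  obtain ⟨m', hm'⟩ : (g : ℤ) ∣ m := by
    refine hg4.dvd_of_dvd_mul_left ⟨h * D2 - g * y ^ 2, ?_⟩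
    rw [hxm, hdZ, hy]
    ring
  have hgZ : (g : ℤ) ≠ 0 := by exact_mod_cast hg0.ne'
  have h4m' : 4 * m' = h * D2 - g * y ^ 2 := by
    apply mul_left_cancel₀ hgZ
    rw [hdZ, hm', hy] at hxm
    linear_combination hxm
  have hm'0 : m' ≠ 0 := by
    rintro rfl
    exact hm (by rw [hm', mul_zero])
  have hgD2 : IsCoprime (g : ℤ) D2 := hcop.of_isCoprime_of_dvd_left ⟨h, hdZ⟩
  -- Squarefreeness of `d = g h` makes `m'` prime to `d`.
  have hnd : ∀ p : ℕ, p.Prime → (p : ℤ) ∣ m' → ¬ (p : ℤ) ∣ (d : ℤ) := by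
    intro p hp hpm hpd
    have hpp := Nat.prime_iff_prime_int.1 hp
    have hs : (p : ℤ) ∣ h * D2 - g * y ^ 2 := h4m' ▸ hpm.mul_left 4
    rw [hdZ] at hpd
    have hghZ : IsCoprime (g : ℤ) h := Nat.isCoprime_iff_coprime.2 hgh
    rcases hpp.dvd_mul.1 hpd with hpg | hph
    · have : (p : ℤ) ∣ h * D2 := (dvd_sub_left (hpg.mul_right _)).1 hs
      rcases hpp.dvd_mul.1 this with hph | hp2
      · exact hpp.not_isUnit (hghZ.isUnit_of_dvd' hpg hph)
      · exact hpp.not_isUnit (hgD2.isUnit_of_dvd' hpg hp2)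
    · have : (p : ℤ) ∣ g * y ^ 2 := (dvd_sub_right (hph.mul_right _)).1 hs
      rcases hpp.dvd_mul.1 this with hpg | hpy
      · exact hpp.not_isUnit (hghZ.isUnit_of_dvd' hpg hph)
      · exact hpp.not_isUnit
          ((Int.isCoprime_iff_gcd_eq_one.2 hyh).isUnit_of_dvd' (hpp.dvd_of_dvd_pow hpy) hph)
  have hFg : multExt (epsGZ d D2) g = jacobiSym D2 g := by
    refine multExt_eq _ (fun n => jacobiSym D2 n) (jacobiSym.one_right _)
      (fun a b ha hb => jacobiSym.mul_right' _ ha hb) g hg0.ne' fun p hp hpg => ?_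
    have hpd : (p : ℤ) ∣ (d : ℤ) := by exact_mod_cast hpg.trans ⟨h, hh⟩
    have hp2 : p ≠ 2 := by
      rintro rfl
      omega
    rw [epsGZ, if_pos hpd, kron_eq_jacobiSym hp hp2 (not_prime_dvd_both hp hcop hpd)]
  have hFm : multExt (epsGZ d D2) m'.natAbs = jacobiSym m'.natAbs d := by
    refine multExt_eq _ (fun n => jacobiSym n d) (by simp)
      (fun a b _ _ => by push_cast; exact jacobiSym.mul_left _ _ _) _
      (Int.natAbs_ne_zero.2 hm'0) fun p hp hpm => ?_
    have hpd := hnd p hp (Int.natCast_dvd.2 hpm)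
    rw [epsGZ, if_neg hpd, kron_eq_jacobiSym_flip hp hd hpd]
  have habs : jacobiSym m'.natAbs d = jacobiSym m' d := by
    rcases Int.natAbs_eq m' with h' | h'
    · rw [← h']
    · conv_rhs => rw [h', jacobiSym.neg _ (Nat.odd_iff.2 (by omega)),
        ZMod.χ₄_nat_one_mod_four hd, one_mul]
  -- Replace `m'` by `4 m' = h D₂ - g y²` and split `(4 m'/d)` as `(h D₂/g) (-g y²/h)`.
  have h4 : jacobiSym m' d = jacobiSym (4 * m') d := by
    rw [jacobiSym.mul_left, jacobiSym.at_four (Nat.odd_iff.2 (by omega)), one_mul]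
  have hA : jacobiSym (4 * m') g = jacobiSym h g * jacobiSym D2 g := by
    rw [← jacobiSym.mul_left]
    refine jacobiSym.mod_left' ?_
    rw [h4m']
    exact Int.ModEq.symm ((Int.modEq_iff_dvd).2 ⟨-y ^ 2, by ring⟩)
  have hB : jacobiSym (4 * m') h = jacobiSym (-g) h := by
    have : jacobiSym (-g * y ^ 2) h = jacobiSym (-g) h := by
      rw [jacobiSym.mul_left, jacobiSym.sq_one' hyh, mul_one]
    rw [← this]
    refine jacobiSym.mod_left' ?_
    rw [h4m']
    exact Int.ModEq.symm ((Int.modEq_iff_dvd).2 ⟨D2, by ring⟩)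
  have hD2sq : jacobiSym D2 g ^ 2 = 1 :=
    jacobiSym.sq_one (Int.isCoprime_iff_gcd_eq_one.1 hgD2.symm)
  have hrec := jacobiSym_flip_mul (by rw [← hh]; exact hd) hgh
  have hsplit : jacobiSym (4 * m') d = jacobiSym (4 * m') g * jacobiSym (4 * m') h := by
    rw [hh]
    exact jacobiSym.mul_right' _ (by omega) (by omega)
  rw [hm', Int.natAbs_mul, Int.natAbs_natCast,
    multExt_mul _ hg0.ne' (Int.natAbs_ne_zero.2 hm'0), hFg, hFm, habs, h4, hsplit, hA, hB]
  linear_combination jacobiSym D2 g ^ 2 * hrec + hD2sq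

/-! ### Parity of the number of ramified primes -/

/-- The primes `p` with `v_p(m)` odd and `ε(p) = -1`. -/
def oddPrimes (D1 D2 m : ℤ) : Set ℕ :=
  {p : ℕ | p.Prime ∧ Odd (padicValInt p m) ∧ epsGZ D1 D2 p = -1}

theorem oddPrimes_eq {D1 D2 m : ℤ} (hm : m ≠ 0) : oddPrimes D1 D2 m =
    ↑(m.natAbs.primeFactors.filter
      fun p => Odd (m.natAbs.factorization p) ∧ epsGZ D1 D2 p = -1) := by
  ext p
  simp only [oddPrimes, Set.mem_ofPred_eq, Finset.coe_filter, Nat.mem_primeFactors]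
  constructor
  · rintro ⟨hp, ho, he⟩
    have hv : m.natAbs.factorization p = padicValInt p m := Nat.factorization_def _ hp
    refine ⟨⟨hp, ?_, Int.natAbs_ne_zero.2 hm⟩, hv ▸ ho, he⟩
    exact Nat.dvd_of_factorization_pos (by rw [hv]; exact ho.pos.ne')
  · rintro ⟨⟨hp, -, -⟩, ho, he⟩
    have hv : m.natAbs.factorization p = padicValInt p m := Nat.factorization_def _ hp
    exact ⟨hp, hv ▸ ho, he⟩

theorem even_ncard_of_odd {D1 D2 x m : ℤ} (h1 : IsPosFundDisc D1) (ho : ¬ (2 : ℤ) ∣ D1)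
    (hcop : IsCoprime D1 D2) (hm : m ≠ 0) (hxm : 4 * m = D1 * D2 - x ^ 2) :
    Even (oddPrimes D1 D2 m).ncard := by
  have h4 := h1.mod_four ho
  have hsq := h1.squarefree ho
  obtain ⟨d, rfl⟩ := Int.eq_ofNat_of_zero_le (by have := h1.1; omega : 0 ≤ D1)
  have := multExt_epsGZ_eq_one (by omega) (Int.squarefree_natCast.1 hsq) hcop hm hxm
  rw [multExt_eq_neg_one_pow _ fun p hp => epsGZ_eq_one_or_neg_one hp hcop] at this
  rw [oddPrimes_eq hm, Set.ncard_coe_finset]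
  exact (neg_one_pow_eq_one_iff_even (by decide)).1 this

/-- The set of ramified primes is symmetric in the two discriminants, because the local symbols
`(D₁, n)` and `(D₂, n)` agree. -/
theorem oddPrimes_comm {D1 D2 x m : ℤ} (h1 : IsPosFundDisc D1) (h2 : IsPosFundDisc D2)
    (hcop : IsCoprime D1 D2) (hm : m ≠ 0) (hxm : 4 * m = D1 * D2 - x ^ 2) :
    oddPrimes D1 D2 m = oddPrimes D2 D1 m := by
  ext p
  refine and_congr_right fun hp => ?_
  have := Fact.mk hp
  have hxm' : 4 * m = D2 * D1 - x ^ 2 := by rw [hxm, mul_comm]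
  rw [← local_symbol h1 h2 hcop hm hxm, ← local_symbol h2 h1 hcop.symm hm hxm', not_iff_not]
  exact isNormOf_disc_comm h1 h2 hm hxm

/-- Let `D1` and `D2` be coprime positive fundamental discriminants and let `x` be an integer
with `x ≡ D1·D2 (mod 2)`; set `m := (D1·D2 − x²)/4`, a nonzero integer. Then for every prime
`p`, the quaternion algebra `ℍ[ℚ_p, D1, x² − D1·D2]` is a division ring if and only if
`v_p(m)` is odd and `ε(p) = −1`. Moreover, the number of primes `p` with this property is
even. -/
theorem stmt17 (D1 D2 x : ℤ)
    (h1 : IsPosFundDisc D1) (h2 : IsPosFundDisc D2)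
    (hcop : IsCoprime D1 D2)
    (hx : x % 2 = (D1 * D2) % 2) :
    (D1 * D2 - x ^ 2) / 4 ≠ 0 ∧
    (∀ (p : ℕ) (_ : Fact p.Prime),
      (∀ z : ℍ[ℚ_[p], ((D1 : ℤ) : ℚ_[p]), ((x ^ 2 - D1 * D2 : ℤ) : ℚ_[p])],
          z ≠ 0 → IsUnit z) ↔
        (Odd (padicValInt p ((D1 * D2 - x ^ 2) / 4)) ∧ epsGZ D1 D2 p = -1)) ∧
    ({p : ℕ | p.Prime ∧ Odd (padicValInt p ((D1 * D2 - x ^ 2) / 4)) ∧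
        epsGZ D1 D2 p = -1}.Finite ∧
      Even ({p : ℕ | p.Prime ∧ Odd (padicValInt p ((D1 * D2 - x ^ 2) / 4)) ∧
        epsGZ D1 D2 p = -1}.ncard)) := by
  set m := (D1 * D2 - x ^ 2) / 4 with hmdef
  have hxm : 4 * m = D1 * D2 - x ^ 2 := four_mul_disc_div h1 h2 hx
  have hm : m ≠ 0 := by
    intro h
    exact disc_sub_sq_ne_zero x h1 hcop (by rw [← hxm, h, mul_zero])
  refine ⟨hm, fun p _ => ?_, ?_, ?_⟩
  · have hD1 : (D1 : ℚ_[p]) ≠ 0 := by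
      have := h1.1
      exact_mod_cast (by omega : D1 ≠ 0)
    rw [quaternion_division_iff two_ne_zero hD1, ← local_symbol h1 h2 hcop hm hxm,
      show x ^ 2 - D1 * D2 = -(4 * m) by linarith]
  · change (oddPrimes D1 D2 m).Finite
    rw [oddPrimes_eq hm]
    exact Finset.finite_toSet _
  · change Even (oddPrimes D1 D2 m).ncard
    by_cases ho : (2 : ℤ) ∣ D1
    · have ho2 : ¬ (2 : ℤ) ∣ D2 := not_prime_dvd_both Nat.prime_two hcop ho
      rw [oddPrimes_comm h1 h2 hcop hm hxm]
      exact even_ncard_of_odd h2 ho2 hcop.symm hm (by rw [hxm, mul_comm])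
    · exact even_ncard_of_odd h1 ho hcop hm hxm
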